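/- Let K be a field, let q ∈ K be nonzero, let R be an associative unital K-algebra, let F, Y ∈ R, set Z := F·Y − q⁻²·(Y·F), and suppose Z·F = F·Z and Z·Y = Y·Z. Let M be a left R-module and v ∈ M. Suppose there exist y₀, z₀, f₀ ∈ ℤ≥0 such that: Y^y·v = 0 for all y > y₀; Z^z·Y^y·v = 0 for all y ≥ 0 and all z > z₀; and F^f·Z^z·Y^y·v = 0 for all z, y ≥ 0 and all f > f₀. Then (F + Y)ⁿ·v = 0 for all n > f₀ + 2z₀ + y₀. -/

import Mathlib

theorem aux_comm {K : Type*} [Field K] (q : K) (hq : q ≠ 0)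
    {R : Type*} [Ring R] [Algebra K R] (F Y Z : R)
    (hZ : Z = F * Y - (q⁻¹) ^ 2 • (Y * F))
    (hZF : Z * F = F * Z) (a : ℕ) :
    ∃ s t : K, Y * F ^ (a + 1) = s • (F ^ (a + 1) * Y) + t • (F ^ a * Z) := by
  have h1 : Y * F = q ^ 2 • (F * Y) - q ^ 2 • Z := by
    have : q ^ 2 * (q⁻¹) ^ 2 = 1 := by field_simp
    rw [hZ, smul_sub, smul_smul, this, one_smul]; abel
  induction a with
  | zero => exact ⟨q ^ 2, -q ^ 2, by simp [h1, sub_eq_add_neg]⟩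
  | succ a ih =>
    obtain ⟨s, t, h⟩ := ih
    refine ⟨s * q ^ 2, t - s * q ^ 2, ?_⟩
    rw [pow_succ F (a + 1), ← mul_assoc, h, add_mul, smul_mul_assoc, smul_mul_assoc,
      mul_assoc _ Y F, h1, mul_assoc _ Z F, hZF, ← mul_assoc (F ^ a), ← pow_succ F a,
      mul_sub, mul_smul_comm, mul_smul_comm, ← mul_assoc]
    module

theorem aux_span {K : Type*} [Field K] (q : K) (hq : q ≠ 0)
    {R : Type*} [Ring R] [Algebra K R] (F Y Z : R)
    (hZ : Z = F * Y - (q⁻¹) ^ 2 • (Y * F))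
    (hZF : Z * F = F * Z) (hZY : Z * Y = Y * Z) (n : ℕ) :
    (F + Y) ^ n ∈ Submodule.span K
      {x : R | ∃ a b c : ℕ, a + 2 * b + c = n ∧ x = F ^ a * Z ^ b * Y ^ c} := by
  induction n with
  | zero => exact Submodule.subset_span ⟨0, 0, 0, by simp, by simp⟩
  | succ n ih =>
    rw [pow_succ']
    generalize (F + Y) ^ n = w at ih ⊢
    induction ih using Submodule.span_induction with
    | zero => simp
    | add x y _ _ hx hy => rw [mul_add]; exact add_mem hx hy
    | smul k x _ hx => rw [mul_smul_comm]; exact Submodule.smul_mem _ _ hx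
    | mem x hx =>
      obtain ⟨a, b, c, hn, rfl⟩ := hx
      rw [add_mul]
      have hc : Y * Z ^ b = Z ^ b * Y := ((show Commute Z Y from hZY).pow_left b).eq.symm
      refine add_mem (Submodule.subset_span ⟨a + 1, b, c, by omega, ?_⟩) ?_
      · simp only [pow_succ', mul_assoc]
      · cases a with
        | zero =>
          refine Submodule.subset_span ⟨0, b, c + 1, by omega, ?_⟩
          rw [pow_zero, one_mul, ← mul_assoc, hc, mul_assoc, ← pow_succ']
        | succ a =>
          obtain ⟨s, t, h⟩ := aux_comm q hq F Y Z hZ hZF a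
          rw [← mul_assoc, ← mul_assoc, h, add_mul, add_mul]
          simp only [smul_mul_assoc]
          refine add_mem (Submodule.smul_mem _ _ (Submodule.subset_span
            ⟨a + 1, b, c + 1, by omega, ?_⟩)) (Submodule.smul_mem _ _ (Submodule.subset_span
            ⟨a, b + 1, c, by omega, ?_⟩))
          · rw [mul_assoc _ Y, hc, ← mul_assoc, mul_assoc _ Y, ← pow_succ']
          · rw [mul_assoc _ Z, ← pow_succ']

/-- If `Z := F * Y - q⁻² • (Y * F)` commutes with both `F` and `Y`, `M` is a left
`R`-module, and `v ∈ M` satisfies the stated local nilpotency bounds with respect to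
`Y`, `Z`, `F`, then `(F + Y) ^ n • v = 0` for all `n > f₀ + 2z₀ + y₀`. -/
theorem stmt_9 {K : Type*} [Field K] (q : K) (hq : q ≠ 0)
    {R : Type*} [Ring R] [Algebra K R] (F Y Z : R)
    (hZ : Z = F * Y - (q⁻¹) ^ 2 • (Y * F))
    (hZF : Z * F = F * Z) (hZY : Z * Y = Y * Z)
    {M : Type*} [AddCommGroup M] [Module R M] (v : M) (y₀ z₀ f₀ : ℕ)
    (hY : ∀ y : ℕ, y₀ < y → Y ^ y • v = 0)
    (hZv : ∀ z y : ℕ, z₀ < z → (Z ^ z * Y ^ y) • v = 0)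
    (hF : ∀ f z y : ℕ, f₀ < f → (F ^ f * Z ^ z * Y ^ y) • v = 0) :
    ∀ n : ℕ, f₀ + 2 * z₀ + y₀ < n → (F + Y) ^ n • v = 0 := by
  intro n hn
  have h := aux_span q hq F Y Z hZ hZF hZY n
  generalize (F + Y) ^ n = w at h ⊢
  induction h using Submodule.span_induction with
  | zero => simp
  | add x y _ _ hx hy => rw [add_smul, hx, hy, add_zero]
  | smul k x _ hx => rw [Algebra.smul_def, mul_smul, hx, smul_zero]
  | mem x hx =>
    obtain ⟨a, b, c, hs, rfl⟩ := hx
    by_cases h1 : y₀ < c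
    · rw [mul_smul, hY c h1, smul_zero]
    by_cases h2 : z₀ < b
    · rw [mul_assoc, mul_smul, hZv b c h2, smul_zero]
    exact hF a b c (by omega)
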